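/- If Re(s) ≥ 0, then |Im(s)|·‖w‖² ≤ (1+√R)·‖w‖² + (1+√R)·‖w‖·‖H‖. -/

import Mathlib

open MeasureTheory Complex

noncomputable section

/-- Partial derivative in the first (x) variable. -/
def pdx (f : ℝ → ℝ → ℂ) : ℝ → ℝ → ℂ := fun x y => deriv (fun x' => f x' y) x

/-- Partial derivative in the second (y) variable. -/
def pdy (f : ℝ → ℝ → ℂ) : ℝ → ℝ → ℂ := fun x y => deriv (fun y' => f x y') y

/-- Laplacian in the space variables. -/
def lap (f : ℝ → ℝ → ℂ) : ℝ → ℝ → ℂ := fun x y => pdx (pdx f) x y + pdy (pdy f) x y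

/-- Square of the L² norm over Ω = [0,1] × [0,1]. -/
def nsq (f : ℝ → ℝ → ℂ) : ℝ := ∫ x in (0:ℝ)..(1:ℝ), ∫ y in (0:ℝ)..(1:ℝ), ‖f x y‖ ^ 2

/-- Smoothness of a function of two real variables. -/
def SmoothFn (f : ℝ → ℝ → ℂ) : Prop := ContDiff ℝ (⊤ : ℕ∞) (fun q : ℝ × ℝ => f q.1 q.2)

/-- 1-periodicity in the first variable. -/
def PeriodicX (f : ℝ → ℝ → ℂ) : Prop := ∀ x y, f (x + 1) y = f x y

/-- Lebesgue measure on the unit square. -/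
def muSq : Measure (ℝ × ℝ) :=
  (volume.restrict (Set.Ioc (0:ℝ) 1)).prod (volume.restrict (Set.Ioc (0:ℝ) 1))

lemma muSq_eq : muSq = (volume : Measure (ℝ × ℝ)).restrict (Set.Ioc (0:ℝ) 1 ×ˢ Set.Ioc (0:ℝ) 1) := by
  rw [muSq, Measure.prod_restrict]; rfl

lemma integrable_muSq {E : Type*} [NormedAddCommGroup E] {f : ℝ × ℝ → E} (hf : Continuous f) :
    Integrable f muSq := by
  rw [muSq_eq]
  have h : IntegrableOn f (Set.Icc (0:ℝ) 1 ×ˢ Set.Icc (0:ℝ) 1) volume :=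
    hf.continuousOn.integrableOn_compact (isCompact_Icc.prod isCompact_Icc)
  exact h.mono_set (Set.prod_mono Set.Ioc_subset_Icc_self Set.Ioc_subset_Icc_self)

lemma integral_muSq {E : Type*} [NormedAddCommGroup E] [NormedSpace ℝ E]
    {f : ℝ × ℝ → E} (hf : Continuous f) :
    ∫ q, f q ∂muSq = ∫ x in (0:ℝ)..1, ∫ y in (0:ℝ)..1, f (x, y) := by
  have h := integrable_muSq hf
  simp only [intervalIntegral.integral_of_le zero_le_one]
  exact integral_prod f h

lemma integral_muSq_symm {E : Type*} [NormedAddCommGroup E] [NormedSpace ℝ E]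
    {f : ℝ × ℝ → E} (hf : Continuous f) :
    ∫ q, f q ∂muSq = ∫ y in (0:ℝ)..1, ∫ x in (0:ℝ)..1, f (x, y) := by
  have h := integrable_muSq hf
  simp only [intervalIntegral.integral_of_le zero_le_one]
  exact integral_prod_symm f h

lemma SmoothFn.hasDerivX {f : ℝ → ℝ → ℂ} (hf : SmoothFn f) (x y : ℝ) :
    HasDerivAt (fun x' => f x' y) (fderiv ℝ (fun q : ℝ × ℝ => f q.1 q.2) (x, y) (1, 0)) x := by
  have h1 : HasFDerivAt (fun q : ℝ × ℝ => f q.1 q.2)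
      (fderiv ℝ (fun q : ℝ × ℝ => f q.1 q.2) (x, y)) (x, y) :=
    (hf.differentiable (by simp) (x, y)).hasFDerivAt
  have h2 : HasDerivAt (fun x' : ℝ => (x', y)) ((1:ℝ), (0:ℝ)) x :=
    (hasDerivAt_id x).prodMk (hasDerivAt_const x y)
  exact h1.comp_hasDerivAt x h2

lemma SmoothFn.hasDerivY {f : ℝ → ℝ → ℂ} (hf : SmoothFn f) (x y : ℝ) :
    HasDerivAt (fun y' => f x y') (fderiv ℝ (fun q : ℝ × ℝ => f q.1 q.2) (x, y) (0, 1)) y := by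
  have h1 : HasFDerivAt (fun q : ℝ × ℝ => f q.1 q.2)
      (fderiv ℝ (fun q : ℝ × ℝ => f q.1 q.2) (x, y)) (x, y) :=
    (hf.differentiable (by simp) (x, y)).hasFDerivAt
  have h2 : HasDerivAt (fun y' : ℝ => (x, y')) ((0:ℝ), (1:ℝ)) y :=
    (hasDerivAt_const y x).prodMk (hasDerivAt_id y)
  exact h1.comp_hasDerivAt y h2

lemma SmoothFn.derX {f : ℝ → ℝ → ℂ} (hf : SmoothFn f) (x y : ℝ) :
    HasDerivAt (fun x' => f x' y) (pdx f x y) x :=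
  (hf.hasDerivX x y).differentiableAt.hasDerivAt

lemma SmoothFn.derY {f : ℝ → ℝ → ℂ} (hf : SmoothFn f) (x y : ℝ) :
    HasDerivAt (fun y' => f x y') (pdy f x y) y :=
  (hf.hasDerivY x y).differentiableAt.hasDerivAt

lemma SmoothFn.pdx {f : ℝ → ℝ → ℂ} (hf : SmoothFn f) : SmoothFn (pdx f) := by
  have h : (fun q : ℝ × ℝ => _root_.pdx f q.1 q.2) =
      fun q => fderiv ℝ (fun q : ℝ × ℝ => f q.1 q.2) q (1, 0) := by
    funext q; exact (hf.hasDerivX q.1 q.2).deriv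
  unfold SmoothFn
  rw [h]
  exact (ContDiff.fderiv_right (m := ((⊤ : ℕ∞) : WithTop ℕ∞)) hf (by simp)).clm_apply contDiff_const

lemma SmoothFn.pdy {f : ℝ → ℝ → ℂ} (hf : SmoothFn f) : SmoothFn (pdy f) := by
  have h : (fun q : ℝ × ℝ => _root_.pdy f q.1 q.2) =
      fun q => fderiv ℝ (fun q : ℝ × ℝ => f q.1 q.2) q (0, 1) := by
    funext q; exact (hf.hasDerivY q.1 q.2).deriv
  unfold SmoothFn
  rw [h]
  exact (ContDiff.fderiv_right (m := ((⊤ : ℕ∞) : WithTop ℕ∞)) hf (by simp)).clm_apply contDiff_const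

lemma SmoothFn.cont {f : ℝ → ℝ → ℂ} (hf : SmoothFn f) :
    Continuous (fun q : ℝ × ℝ => f q.1 q.2) := ContDiff.continuous hf

lemma PeriodicX.pdx {f : ℝ → ℝ → ℂ} (hf : PeriodicX f) : PeriodicX (pdx f) := by
  intro x y
  have h : (fun x' => f x' y) = fun x' => f (x' + 1) y := by funext t; exact (hf t y).symm
  unfold _root_.pdx
  conv_rhs => rw [h]
  rw [deriv_comp_add_const (fun x' => f x' y) 1 x]

lemma int_dx_zero {g g' : ℝ → ℝ → ℂ} (hg : ∀ x y, HasDerivAt (fun x' => g x' y) (g' x y) x)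
    (hc : Continuous (fun q : ℝ × ℝ => g' q.1 q.2)) (hp : PeriodicX g) :
    ∫ q, g' q.1 q.2 ∂muSq = 0 := by
  rw [integral_muSq_symm hc]
  have : ∀ y, ∫ x in (0:ℝ)..1, g' x y = 0 := by
    intro y
    rw [intervalIntegral.integral_eq_sub_of_hasDerivAt (fun x _ => hg x y)]
    · have := hp 0 y
      simp at this; simp [this]
    · exact (hc.comp (by fun_prop : Continuous fun x : ℝ => (x, y))).intervalIntegrable _ _
  simp [this]

lemma int_dy_zero {g g' : ℝ → ℝ → ℂ} (hg : ∀ x y, HasDerivAt (fun y' => g x y') (g' x y) y)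
    (hc : Continuous (fun q : ℝ × ℝ => g' q.1 q.2)) (h0 : ∀ x, g x 0 = 0) (h1 : ∀ x, g x 1 = 0) :
    ∫ q, g' q.1 q.2 ∂muSq = 0 := by
  rw [integral_muSq hc]
  have : ∀ x, ∫ y in (0:ℝ)..1, g' x y = 0 := by
    intro x
    rw [intervalIntegral.integral_eq_sub_of_hasDerivAt (fun y _ => hg x y)]
    · simp [h0, h1]
    · exact (hc.comp (by fun_prop : Continuous fun y : ℝ => (x, y))).intervalIntegrable _ _
  simp [this]

lemma cs_muSq {a b : ℝ × ℝ → ℝ} (ha : Continuous a) (hb : Continuous b) :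
    ∫ q, a q * b q ∂muSq ≤ √(∫ q, a q ^ 2 ∂muSq) * √(∫ q, b q ^ 2 ∂muSq) := by
  have hA : Integrable (fun q => a q ^ 2) muSq := integrable_muSq (ha.pow 2)
  have hB : Integrable (fun q => b q ^ 2) muSq := integrable_muSq (hb.pow 2)
  have hAB : Integrable (fun q => a q * b q) muSq := integrable_muSq (ha.mul hb)
  set A := ∫ q, a q ^ 2 ∂muSq with hAdef
  set B := ∫ q, b q ^ 2 ∂muSq with hBdef
  set C := ∫ q, a q * b q ∂muSq with hCdef
  have key : ∀ t : ℝ, 0 ≤ B * (t * t) + (2 * C) * t + A := by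
    intro t
    have h : 0 ≤ ∫ q, (a q + t * b q) ^ 2 ∂muSq := integral_nonneg fun q => sq_nonneg _
    have e : ∫ q, (a q + t * b q) ^ 2 ∂muSq = B * (t * t) + (2 * C) * t + A := by
      have e1 : (fun q => (a q + t * b q) ^ 2)
          = fun q => (a q ^ 2 + (2 * t) * (a q * b q)) + (t * t) * b q ^ 2 := by
        funext q; ring
      rw [e1, integral_add (by exact hA.add (hAB.const_mul _)) (hB.const_mul _),
        integral_add hA (by exact hAB.const_mul _), integral_const_mul, integral_const_mul]
      ring
    rwa [e] at h
  have hd := discrim_le_zero key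
  unfold discrim at hd
  have hA0 : 0 ≤ A := integral_nonneg fun q => sq_nonneg _
  rw [← Real.sqrt_mul hA0]
  apply Real.le_sqrt_of_sq_le
  nlinarith

lemma cs_vec (a b c d : ℂ) : ‖star a * c + star b * d‖
    ≤ √(‖a‖ ^ 2 + ‖b‖ ^ 2) * √(‖c‖ ^ 2 + ‖d‖ ^ 2) := by
  rw [← Real.sqrt_mul (by positivity)]
  apply Real.le_sqrt_of_sq_le
  have h : ‖star a * c + star b * d‖ ≤ ‖a‖ * ‖c‖ + ‖b‖ * ‖d‖ := by
    refine (norm_add_le _ _).trans ?_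
    simp
  have h2 := pow_le_pow_left₀ (norm_nonneg _) h 2
  nlinarith [sq_nonneg (‖a‖ * ‖d‖ - ‖b‖ * ‖c‖)]

lemma cs_full {a b c d : ℝ × ℝ → ℂ} (ha : Continuous a) (hb : Continuous b) (hc : Continuous c)
    (hd : Continuous d) {f : ℝ × ℝ → ℂ} (hf : Continuous f)
    (hle : ∀ᵐ q ∂muSq, ‖f q‖ ≤ ‖star (a q) * c q + star (b q) * d q‖) :
    ‖∫ q, f q ∂muSq‖ ≤ √(∫ q, (‖a q‖ ^ 2 + ‖b q‖ ^ 2) ∂muSq)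
      * √(∫ q, (‖c q‖ ^ 2 + ‖d q‖ ^ 2) ∂muSq) := by
  have c1 : Continuous fun q => √(‖a q‖ ^ 2 + ‖b q‖ ^ 2) := by fun_prop
  have c2 : Continuous fun q => √(‖c q‖ ^ 2 + ‖d q‖ ^ 2) := by fun_prop
  have h := cs_muSq c1 c2
  have e1 : ∀ x y : ℝ, √(x ^ 2 + y ^ 2) ^ 2 = x ^ 2 + y ^ 2 := fun x y =>
    Real.sq_sqrt (by positivity)
  simp only [e1] at h
  refine le_trans (norm_integral_le_integral_norm _) (le_trans ?_ h)
  refine integral_mono_ae (integrable_muSq hf.norm) (integrable_muSq (c1.mul c2)) ?_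
  filter_upwards [hle] with q hq
  exact hq.trans (cs_vec _ _ _ _)

lemma ae_muSq : ∀ᵐ q ∂muSq, q.1 ∈ Set.Icc (0:ℝ) 1 ∧ q.2 ∈ Set.Icc (0:ℝ) 1 := by
  rw [muSq_eq]
  filter_upwards [ae_restrict_mem (measurableSet_Ioc.prod measurableSet_Ioc)] with q hq
  exact ⟨Set.Ioc_subset_Icc_self hq.1, Set.Ioc_subset_Icc_self hq.2⟩

lemma nsq_add {f g : ℝ → ℝ → ℂ} (hf : SmoothFn f) (hg : SmoothFn g) :
    nsq f + nsq g = ∫ q, (‖f q.1 q.2‖ ^ 2 + ‖g q.1 q.2‖ ^ 2) ∂muSq := by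
  have cf := hf.cont
  have cg := hg.cont
  have c1 : Continuous fun q : ℝ × ℝ => ‖f q.1 q.2‖ ^ 2 := by fun_prop
  have c2 : Continuous fun q : ℝ × ℝ => ‖g q.1 q.2‖ ^ 2 := by fun_prop
  rw [integral_add (integrable_muSq c1) (integrable_muSq c2), integral_muSq c1, integral_muSq c2]
  rfl

/-- The purely real endgame. -/
lemma endgame {R W D h : ℝ} {s K C B : ℂ} (hR : 0 < R) (hW : 0 ≤ W) (hD : 0 ≤ D)
    (hs : 0 ≤ s.re) (hK : K.re = 0)
    (hE : s * W + K + C + (1 / (R:ℂ)) * D = B)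
    (bK : ‖K‖ ≤ √W * √D) (bC : ‖C‖ ≤ W / 2) (bB : ‖B‖ ≤ √W * √h) :
    |s.im| * W ≤ (1 + √R) * W + (1 + √R) * (√W * √h) := by
  have hre := congrArg Complex.re hE
  have him := congrArg Complex.im hE
  rw [show (1 / (R:ℂ)) = ((1 / R : ℝ) : ℂ) by push_cast; rfl] at hre him
  simp [hK] at hre him
  set a := √W with ha
  set b := √h
  set d := √D with hd
  have hWa : W = a ^ 2 := (Real.sq_sqrt hW).symm
  have hDd : D = d ^ 2 := (Real.sq_sqrt hD).symm
  have a0 : 0 ≤ a := Real.sqrt_nonneg _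
  have b0 : 0 ≤ b := Real.sqrt_nonneg _
  have d0 : 0 ≤ d := Real.sqrt_nonneg _
  have r0 : 0 ≤ √R := Real.sqrt_nonneg _
  have hr : √R ^ 2 = R := Real.sq_sqrt hR.le
  have h1 := (abs_le.mp ((abs_re_le_norm C).trans bC)).1
  have h2 := (abs_le.mp ((abs_re_le_norm B).trans bB)).2
  have hsW : 0 ≤ s.re * W := mul_nonneg hs hW
  have h3 : R⁻¹ * D ≤ W / 2 + a * b := by linarith
  have h4 : D ≤ R * (W / 2 + a * b) := by
    rwa [inv_mul_le_iff₀ hR] at h3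
  have h5 : d ≤ √R * (a + b) := by
    refine (pow_le_pow_iff_left₀ d0 (by positivity) two_ne_zero).1 ?_
    rw [← hDd, mul_pow, hr]
    refine h4.trans (mul_le_mul_of_nonneg_left ?_ hR.le)
    rw [hWa]; nlinarith [mul_nonneg a0 b0]
  have h6 : a * d ≤ √R * (W + a * b) := by
    calc a * d ≤ a * (√R * (a + b)) := mul_le_mul_of_nonneg_left h5 a0
      _ = _ := by rw [hWa]; ring
  have k1 := abs_le.mp ((abs_im_le_norm C).trans bC)
  have k2 := abs_le.mp ((abs_im_le_norm B).trans bB)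
  have k3 := abs_le.mp ((abs_im_le_norm K).trans bK)
  have k4 : |s.im| * W = |s.im * W| := by rw [abs_mul, abs_of_nonneg hW]
  rw [k4, abs_le]
  constructor <;> nlinarith

lemma int_add4 {f1 f2 f3 f4 : ℝ × ℝ → ℂ} (c1 : Continuous f1) (c2 : Continuous f2)
    (c3 : Continuous f3) (c4 : Continuous f4) :
    ∫ q, (f1 q + f2 q + f3 q + f4 q) ∂muSq
      = ∫ q, f1 q ∂muSq + ∫ q, f2 q ∂muSq + ∫ q, f3 q ∂muSq + ∫ q, f4 q ∂muSq := by
  have i1 := integrable_muSq c1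
  have i2 := integrable_muSq c2
  have i3 := integrable_muSq c3
  have i4 := integrable_muSq c4
  have i12 : Integrable (fun q => f1 q + f2 q) muSq := i1.add i2
  have i123 : Integrable (fun q => f1 q + f2 q + f3 q) muSq := i12.add i3
  rw [integral_add i123 i4, integral_add i12 i3, integral_add i1 i2]

/-- If Re(s) ≥ 0, then
|Im(s)|·‖w‖² ≤ (1+√R)·‖w‖² + (1+√R)·‖w‖·‖H‖. -/
theorem imaginary_part_estimate
    (R : ℝ) (hR : 0 < R) (s : ℂ)
    (u v p F G : ℝ → ℝ → ℂ)
    (hu : SmoothFn u) (hv : SmoothFn v) (hp : SmoothFn p) (hF : SmoothFn F) (hG : SmoothFn G)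
    (hup : PeriodicX u) (hvp : PeriodicX v) (hpp : PeriodicX p)
    (hFp : PeriodicX F) (hGp : PeriodicX G)
    (hub0 : ∀ x, u x 0 = 0) (hub1 : ∀ x, u x 1 = 0)
    (hvb0 : ∀ x, v x 0 = 0) (hvb1 : ∀ x, v x 1 = 0)
    (hdiv : ∀ x y, pdx u x y + pdy v x y = 0)
    (heq1 : ∀ x ∈ Set.Icc (0:ℝ) 1, ∀ y ∈ Set.Icc (0:ℝ) 1,
      s * u x y + (y:ℂ) * pdx u x y + v x y + pdx p x y
        = (1/(R:ℂ)) * lap u x y + F x y)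
    (heq2 : ∀ x ∈ Set.Icc (0:ℝ) 1, ∀ y ∈ Set.Icc (0:ℝ) 1,
      s * v x y + (y:ℂ) * pdx v x y + pdy p x y
        = (1/(R:ℂ)) * lap v x y + G x y)
    (hsre : 0 ≤ s.re) :
    |s.im| * (nsq u + nsq v)
      ≤ (1 + Real.sqrt R) * (nsq u + nsq v)
        + (1 + Real.sqrt R) * (Real.sqrt (nsq u + nsq v) * Real.sqrt (nsq F + nsq G)) := by
  have cu := hu.cont
  have cv := hv.cont
  have cp := hp.cont
  have cF := hF.cont
  have cG := hG.cont
  have cux := hu.pdx.cont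
  have cvx := hv.pdx.cont
  have cpx := hp.pdx.cont
  have cuy := hu.pdy.cont
  have cvy := hv.pdy.cont
  have cpy := hp.pdy.cont
  have cuxx := hu.pdx.pdx.cont
  have cvxx := hv.pdx.pdx.cont
  have cuyy := hu.pdy.pdy.cont
  have cvyy := hv.pdy.pdy.cont
  have cy : Continuous fun q : ℝ × ℝ => ((q.2 : ℝ) : ℂ) := by fun_prop
  obtain ⟨A, hAd⟩ : ∃ f : ℝ → ℝ → ℂ, f = (fun x y => (1 / (R:ℂ)) * ((star (pdx u x y) * pdx u x y
      + star (u x y) * pdx (pdx u) x y) + (star (pdx v x y) * pdx v x y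
      + star (v x y) * pdx (pdx v) x y))
      - (star (pdx u x y) * p x y + star (u x y) * pdx p x y)) := ⟨_, rfl⟩
  have cA : Continuous fun q : ℝ × ℝ => A q.1 q.2 := by
    simp only [hAd]; fun_prop
  have hΦ : ∫ q, A q.1 q.2 ∂muSq = 0 := by
    refine int_dx_zero (g' := A) (g := fun x y => (1 / (R:ℂ)) * (star (u x y) * pdx u x y
      + star (v x y) * pdx v x y) - star (u x y) * p x y) ?_ cA ?_
    · intro x y
      rw [hAd]
      exact ((((hu.derX x y).star.mul (hu.pdx.derX x y)).add
        ((hv.derX x y).star.mul (hv.pdx.derX x y))).const_mul _).sub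
        ((hu.derX x y).star.mul (hp.derX x y))
    · intro x y
      simp only [hup x y, hvp x y, hpp x y, hup.pdx x y, hvp.pdx x y]
  obtain ⟨B, hBd⟩ : ∃ f : ℝ → ℝ → ℂ, f = (fun x y => (1 / (R:ℂ)) * ((star (pdy u x y) * pdy u x y
      + star (u x y) * pdy (pdy u) x y) + (star (pdy v x y) * pdy v x y
      + star (v x y) * pdy (pdy v) x y))
      - (star (pdy v x y) * p x y + star (v x y) * pdy p x y)) := ⟨_, rfl⟩
  have cB : Continuous fun q : ℝ × ℝ => B q.1 q.2 := by
    simp only [hBd]; fun_prop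
  have hΨ : ∫ q, B q.1 q.2 ∂muSq = 0 := by
    refine int_dy_zero (g' := B) (g := fun x y => (1 / (R:ℂ)) * (star (u x y) * pdy u x y
      + star (v x y) * pdy v x y) - star (v x y) * p x y) ?_ cB ?_ ?_
    · intro x y
      rw [hBd]
      exact ((((hu.derY x y).star.mul (hu.pdy.derY x y)).add
        ((hv.derY x y).star.mul (hv.pdy.derY x y))).const_mul _).sub
        ((hv.derY x y).star.mul (hp.derY x y))
    · intro x; simp [hub0, hvb0]
    · intro x; simp [hub1, hvb1]
  -- the four quadratic densities
  have cw : Continuous fun q : ℝ × ℝ => ‖u q.1 q.2‖ ^ 2 + ‖v q.1 q.2‖ ^ 2 := by fun_prop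
  have cd : Continuous fun q : ℝ × ℝ => (‖pdx u q.1 q.2‖ ^ 2 + ‖pdx v q.1 q.2‖ ^ 2)
      + (‖pdy u q.1 q.2‖ ^ 2 + ‖pdy v q.1 q.2‖ ^ 2) := by fun_prop
  have cd1 : Continuous fun q : ℝ × ℝ => ‖pdx u q.1 q.2‖ ^ 2 + ‖pdx v q.1 q.2‖ ^ 2 := by fun_prop
  have ck : Continuous fun q : ℝ × ℝ => (q.2 : ℂ) * (star (u q.1 q.2) * pdx u q.1 q.2
      + star (v q.1 q.2) * pdx v q.1 q.2) := by fun_prop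
  have cc : Continuous fun q : ℝ × ℝ => star (u q.1 q.2) * v q.1 q.2 := by fun_prop
  have cb : Continuous fun q : ℝ × ℝ => star (u q.1 q.2) * F q.1 q.2
      + star (v q.1 q.2) * G q.1 q.2 := by fun_prop
  rw [nsq_add hu hv, nsq_add hF hG]
  refine endgame (D := ∫ q, ((‖pdx u q.1 q.2‖ ^ 2 + ‖pdx v q.1 q.2‖ ^ 2)
      + (‖pdy u q.1 q.2‖ ^ 2 + ‖pdy v q.1 q.2‖ ^ 2)) ∂muSq)
    (K := ∫ q, (q.2 : ℂ) * (star (u q.1 q.2) * pdx u q.1 q.2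
      + star (v q.1 q.2) * pdx v q.1 q.2) ∂muSq)
    (C := ∫ q, star (u q.1 q.2) * v q.1 q.2 ∂muSq)
    (B := ∫ q, (star (u q.1 q.2) * F q.1 q.2 + star (v q.1 q.2) * G q.1 q.2) ∂muSq)
    hR (integral_nonneg fun q => by positivity) (integral_nonneg fun q => by positivity)
    hsre ?_ ?_ ?_ ?_ ?_
  · obtain ⟨Z, hZd⟩ : ∃ f : ℝ → ℝ → ℂ, f = (fun x y : ℝ => (y:ℂ) * ((star (pdx u x y) * u x y + star (u x y) * pdx u x y)
        + (star (pdx v x y) * v x y + star (v x y) * pdx v x y))) := ⟨_, rfl⟩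
    have cZ : Continuous fun q : ℝ × ℝ => Z q.1 q.2 := by
      simp only [hZd]; fun_prop
    have hz : ∫ q, Z q.1 q.2 ∂muSq = 0 := by
      refine int_dx_zero (g' := Z) (g := fun x y => (y:ℂ) * (star (u x y) * u x y + star (v x y) * v x y))
        ?_ cZ ?_
      · intro x y
        rw [hZd]
        exact (((hu.derX x y).star.mul (hu.derX x y)).add
          ((hv.derX x y).star.mul (hv.derX x y))).const_mul _
      · intro x y
        simp only [hup x y, hvp x y]
    have e : (fun q : ℝ × ℝ => Z q.1 q.2)
        = fun q : ℝ × ℝ => ((q.2 : ℂ) * (star (u q.1 q.2) * pdx u q.1 q.2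
            + star (v q.1 q.2) * pdx v q.1 q.2))
          + (starRingEnd ℂ) ((q.2 : ℂ) * (star (u q.1 q.2) * pdx u q.1 q.2
            + star (v q.1 q.2) * pdx v q.1 q.2)) := by
      funext q
      simp only [hZd, star_def, map_mul, map_add, conj_conj, conj_ofReal]
      ring
    have ck' : Continuous fun q : ℝ × ℝ => (starRingEnd ℂ) ((q.2 : ℂ) * (star (u q.1 q.2)
        * pdx u q.1 q.2 + star (v q.1 q.2) * pdx v q.1 q.2)) := continuous_conj.comp ck
    rw [e, integral_add (integrable_muSq ck) (integrable_muSq ck'), integral_conj, add_conj] at hz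
    have := congrArg Complex.re hz
    simpa using this
  · have hpt : ∀ᵐ q ∂muSq,
        (s * ((‖u q.1 q.2‖ ^ 2 + ‖v q.1 q.2‖ ^ 2 : ℝ) : ℂ)
        + (q.2 : ℂ) * (star (u q.1 q.2) * pdx u q.1 q.2 + star (v q.1 q.2) * pdx v q.1 q.2)
        + star (u q.1 q.2) * v q.1 q.2
        + (1 / (R:ℂ)) * (((‖pdx u q.1 q.2‖ ^ 2 + ‖pdx v q.1 q.2‖ ^ 2)
          + (‖pdy u q.1 q.2‖ ^ 2 + ‖pdy v q.1 q.2‖ ^ 2) : ℝ) : ℂ)) =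
        (star (u q.1 q.2) * F q.1 q.2 + star (v q.1 q.2) * G q.1 q.2)
        + (A q.1 q.2
        + B q.1 q.2) := by
      filter_upwards [ae_muSq] with q hq
      have h1 := heq1 q.1 hq.1 q.2 hq.2
      have h2 := heq2 q.1 hq.1 q.2 hq.2
      have h3 := congrArg star (hdiv q.1 q.2)
      rw [star_add, star_zero] at h3
      have hn : ∀ z : ℂ, (‖z‖ : ℂ) ^ 2 = star z * z := fun z => (conj_mul' z).symm
      simp only [lap] at h1 h2
      simp only [hAd, hBd]
      push_cast
      simp only [hn]
      linear_combination star (u q.1 q.2) * h1 + star (v q.1 q.2) * h2 + p q.1 q.2 * h3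
    have hI := integral_congr_ae hpt
    have cAB : Continuous fun q : ℝ × ℝ => A q.1 q.2 + B q.1 q.2 := cA.add cB
    rw [integral_add (integrable_muSq cb) (integrable_muSq cAB),
      integral_add (integrable_muSq cA) (integrable_muSq cB), hΦ, hΨ,
      int_add4 (by fun_prop) ck cc (by fun_prop),
      integral_const_mul, integral_const_mul, integral_complex_ofReal, integral_complex_ofReal] at hI
    rw [add_zero, add_zero] at hI
    exact hI
  · refine (cs_full cu cv cux cvx ck ?_).trans ?_
    · filter_upwards [ae_muSq] with q hq
      rw [norm_mul]
      refine mul_le_of_le_one_left (norm_nonneg _) ?_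
      rw [norm_real, Real.norm_eq_abs, abs_of_nonneg hq.2.1]
      exact hq.2.2
    · refine mul_le_mul_of_nonneg_left (Real.sqrt_le_sqrt ?_) (Real.sqrt_nonneg _)
      refine integral_mono (integrable_muSq cd1) (integrable_muSq cd) fun q => ?_
      exact le_add_of_nonneg_right (by positivity)
  · refine (norm_integral_le_integral_norm _).trans ?_
    rw [← integral_div]
    refine integral_mono (integrable_muSq cc.norm) (integrable_muSq (cw.div_const 2)) fun q => ?_
    simp only [norm_mul, norm_star]
    nlinarith [sq_nonneg (‖u q.1 q.2‖ - ‖v q.1 q.2‖)]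
  · exact cs_full cu cv cF cG cb (Filter.Eventually.of_forall fun q => le_rfl)

end
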